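/- For segments s₁ and s₂, one has s₁ ∈ c_{s₂}^− if and only if s₁ ▷ s₂; that is, there exists an MY path p ∈ ℙ_{s₂} with s₁ ∈ c_p^− if and only if s₂ = [i₂, j₂], s₁ = [i₁, j₁] satisfy i₂ < i₁ ≤ j₂ < j₁ ≤ h + i₂. -/

import Mathlib

/-!
Along an MY path `p` for `s = [i, j]` the segments `pathSeg p k` grow from `[j, j]` to `[i, i + h]`:
an up-step moves the right endpoint up by one, a down-step moves the left endpoint down by one.
At a local maximum, with segment `[i₁, j₁]`, an up-step has just moved the right endpoint and a
down-step is about to move the left one, so comparison with the two ends of the chain gives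
`i < i₁ ≤ j < j₁ ≤ h + i`.

Conversely, `i < i₁` and `j < j₁` say that the point `(supp s₁, spar s₁)` lies above the V-shaped
path `highestPath s`, and `i₁ ≤ j`, `j₁ ≤ h + i` say that the tent `spar s₁ - |k - supp s₁|` with
apex at that point is not above the V at either end. The maximum of the V and the tent is then an MY
path for `s` with a local maximum at the apex.
-/

namespace SnakePaper

/-- `zle a b` : `b - a` is a nonnegative integer (the integrality order `a ≤ b`). -/
def zle (a b : ℚ) : Prop := ∃ n : ℤ, 0 ≤ n ∧ b - a = (n : ℚ)

/-- `zlt a b` : `b - a` is a positive integer (the integrality order `a < b`). -/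
def zlt (a b : ℚ) : Prop := ∃ n : ℤ, 0 < n ∧ b - a = (n : ℚ)

/-- `s = (i, j)` is an `N`-segment: `2i ∈ ℤ`, `j - i ∈ ℤ` and `0 ≤ j - i ≤ N + 1`. -/
def IsSeg (N : ℕ) (s : ℚ × ℚ) : Prop :=
  (∃ m : ℤ, 2 * s.1 = (m : ℚ)) ∧
  ∃ n : ℤ, s.2 - s.1 = (n : ℚ) ∧ 0 ≤ n ∧ (n : ℚ) ≤ (N : ℚ) + 1

/-- `s = (i, j)` is a proper `N`-segment: `2i ∈ ℤ`, `j - i ∈ ℤ` and `0 < j - i < N + 1`. -/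
def IsProperSeg (N : ℕ) (s : ℚ × ℚ) : Prop :=
  (∃ m : ℤ, 2 * s.1 = (m : ℚ)) ∧
  ∃ n : ℤ, s.2 - s.1 = (n : ℚ) ∧ 0 < n ∧ (n : ℚ) < (N : ℚ) + 1

/-- `supp [i,j] = j - i`. -/
def supp (s : ℚ × ℚ) : ℚ := s.2 - s.1

/-- `spar [i,j] = i + j`. -/
def spar (s : ℚ × ℚ) : ℚ := s.1 + s.2

/-- Right dual `s* = [j - h, i]`, where `h = N + 1`. -/
def dual (N : ℕ) (s : ℚ × ℚ) : ℚ × ℚ := (s.2 - ((N : ℚ) + 1), s.1)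

/-- Left dual `*s = [j, i + h]`, where `h = N + 1`. -/
def ldual (N : ℕ) (s : ℚ × ℚ) : ℚ × ℚ := (s.2, s.1 + ((N : ℚ) + 1))

/-- `1 + s = [i + 1, j + 1]`. -/
def shift (s : ℚ × ℚ) : ℚ × ℚ := (s.1 + 1, s.2 + 1)

/-- `Covers N s₂ s₁` : `s₂ ▷ s₁`, i.e. `i₁ < i₂ ≤ j₁ < j₂ ≤ h + i₁` (integrality order). -/
def Covers (N : ℕ) (s₂ s₁ : ℚ × ℚ) : Prop :=
  zlt s₁.1 s₂.1 ∧ zle s₂.1 s₁.2 ∧ zlt s₁.2 s₂.2 ∧ zle s₂.2 (((N : ℚ) + 1) + s₁.1)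

/-- For `s₂ ▷ s₁`, the intersection `s₁ ∩ s₂ = [i₂, j₁]`. -/
def seginter (s₁ s₂ : ℚ × ℚ) : ℚ × ℚ := (s₂.1, s₁.2)

/-- For `s₂ ▷ s₁`, the union `s₁ ∪ s₂ = [i₁, j₂]`. -/
def segunion (s₁ s₂ : ℚ × ℚ) : ℚ × ℚ := (s₁.1, s₂.2)

/-- `(s 0, …, s (l-1))` is a ladder of length `l`. -/
def IsLadder (N l : ℕ) (s : ℕ → ℚ × ℚ) : Prop :=
  (∀ k, k < l → IsSeg N (s k)) ∧
  ∀ k m, k < m → m < l → zlt (s k).1 (s m).1 ∧ zlt (s k).2 (s m).2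

/-- `(s₁, s₂)` is a ladder of length 2. -/
def IsLadder2 (N : ℕ) (s₁ s₂ : ℚ × ℚ) : Prop :=
  IsSeg N s₁ ∧ IsSeg N s₂ ∧ zlt s₁.1 s₂.1 ∧ zlt s₁.2 s₂.2

/-- Componentwise covering of two length-`l` tuples: `𝐬 ▷ 𝐬'`. -/
def CoversMulti (N l : ℕ) (s s' : ℕ → ℚ × ℚ) : Prop :=
  ∀ m, m < l → Covers N (s m) (s' m)

/-- `𝐬 ▷_p 𝐬'` for length-`l` tuples: `𝐬(0, l−k) ▷ 𝐬'(k, l)` for all `0 ≤ k ≤ p`. -/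
def CoversP (N l p : ℕ) (s s' : ℕ → ℚ × ℚ) : Prop :=
  ∀ k, k ≤ p → ∀ m, m + k < l → Covers N (s m) (s' (m + k))

/-- `p` is an MY path for the segment `s` (`h = N + 1`; only values on `{0, …, h}` matter). -/
def IsMYPath (N : ℕ) (s : ℚ × ℚ) (p : ℕ → ℤ) : Prop :=
  (∀ k, k < N + 1 → p (k + 1) = p k + 1 ∨ p (k + 1) = p k - 1) ∧
  (p 0 : ℚ) = 2 * s.2 ∧ (p (N + 1) : ℚ) = ((N : ℚ) + 1) + 2 * s.1

/-- `s_{p,k} = [(p(k) - k)/2, (p(k) + k)/2]`. -/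
def pathSeg (p : ℕ → ℤ) (k : ℕ) : ℚ × ℚ :=
  (((p k : ℚ) - (k : ℚ)) / 2, ((p k : ℚ) + (k : ℚ)) / 2)

/-- `c_p^-` : segments at the local maxima of `p` in `[1, N]`. -/
def cMinus (N : ℕ) (p : ℕ → ℤ) : Set (ℚ × ℚ) :=
  {t | ∃ k, 1 ≤ k ∧ k ≤ N ∧ t = pathSeg p k ∧ p (k - 1) = p k - 1 ∧ p (k + 1) = p k - 1}

/-- `c_p^+` : segments at the local minima of `p` in `[1, N]`. -/
def cPlus (N : ℕ) (p : ℕ → ℤ) : Set (ℚ × ℚ) :=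
  {t | ∃ k, 1 ≤ k ∧ k ≤ N ∧ t = pathSeg p k ∧ p (k - 1) = p k + 1 ∧ p (k + 1) = p k + 1}

/-- `c_s^- = ⋃_{p ∈ ℙ_s} c_p^-`. -/
def cSegMinus (N : ℕ) (s : ℚ × ℚ) : Set (ℚ × ℚ) :=
  {t | ∃ p, IsMYPath N s p ∧ t ∈ cMinus N p}

/-- `c_s^+ = ⋃_{p ∈ ℙ_s} c_p^+`. -/
def cSegPlus (N : ℕ) (s : ℚ × ℚ) : Set (ℚ × ℚ) :=
  {t | ∃ p, IsMYPath N s p ∧ t ∈ cPlus N p}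

/-- `(p 0, …, p (l-1)) ∈ ℙ_𝐬` for the length-`l` tuple `𝐬`. -/
def IsPathTuple (N l : ℕ) (s : ℕ → ℚ × ℚ) (p : ℕ → ℕ → ℤ) : Prop :=
  (∀ m, m < l → IsMYPath N (s m) (p m)) ∧
  ∀ m n, m < n → n < l → ∀ k, k ≤ N + 1 → p m k < p n k

/-- The highest path `p_s(k) = spar(s) + |k - supp(s)|` (rational-valued formula). -/
def highestPath (s : ℚ × ℚ) (k : ℚ) : ℚ := spar s + |k - supp s|

/-- The lowest path `p_s^*(k) = spar(s) + h - |k - (h - supp(s))|` (rational-valued formula). -/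
def lowestPath (N : ℕ) (s : ℚ × ℚ) (k : ℚ) : ℚ :=
  spar s + ((N : ℚ) + 1) - |k - (((N : ℚ) + 1) - supp s)|

/-- `Small N s₁' t` : `spar(t) ≤ spar(*s₁') - |supp(t) - supp(*s₁')|` (integrality order). -/
def Small (N : ℕ) (s₁' t : ℚ × ℚ) : Prop :=
  zle (spar t) (spar (ldual N s₁') - |supp t - supp (ldual N s₁')|)

/-- `(s₁, s₂)` and `(s₁', s₂')` are ladders and `(s₁, s₂) ▷₁ (s₁', s₂')`. -/
def Pair1Cover (N : ℕ) (s₁ s₁' s₂ s₂' : ℚ × ℚ) : Prop :=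
  IsLadder2 N s₁ s₂ ∧ IsLadder2 N s₁' s₂' ∧
  Covers N s₁ s₁' ∧ Covers N s₂ s₂' ∧ Covers N s₁ s₂'

section IntegralityOrder

variable {a b c : ℚ}

theorem zle_refl (a : ℚ) : zle a a := ⟨0, le_rfl, by simp⟩

theorem zle_add_one (a : ℚ) : zle a (a + 1) := ⟨1, by simp, by simp⟩

theorem zlt_add_one (a : ℚ) : zlt a (a + 1) := ⟨1, by simp, by simp⟩

theorem zle.trans : zle a b → zle b c → zle a c := by
  rintro ⟨m, hm, hab⟩ ⟨n, hn, hbc⟩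
  exact ⟨m + n, by positivity, by push_cast; linarith⟩

theorem zlt.trans_zle : zlt a b → zle b c → zlt a c := by
  rintro ⟨m, hm, hab⟩ ⟨n, hn, hbc⟩
  exact ⟨m + n, by positivity, by push_cast; linarith⟩

theorem zle.trans_zlt : zle a b → zlt b c → zlt a c := by
  rintro ⟨m, hm, hab⟩ ⟨n, hn, hbc⟩
  exact ⟨m + n, by positivity, by push_cast; linarith⟩

theorem zle.le : zle a b → a ≤ b := by
  rintro ⟨n, hn, h⟩
  have : (0 : ℚ) ≤ n := mod_cast hn
  linarith

theorem zlt.lt : zlt a b → a < b := by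
  rintro ⟨n, hn, h⟩
  have : (0 : ℚ) < n := mod_cast hn
  linarith

end IntegralityOrder

/-- `p` is a lattice path with steps `±1` on `{0, …, n}`, the first of the three conditions in
`IsMYPath`; the values of `p` beyond `n` are irrelevant. -/
def IsUnitStepPath (n : ℕ) (p : ℕ → ℤ) : Prop :=
  ∀ k, k < n → p (k + 1) = p k + 1 ∨ p (k + 1) = p k - 1

theorem isUnitStepPath_abs_sub (n : ℕ) (c : ℤ) : IsUnitStepPath n fun m ↦ |(m : ℤ) - c| := by
  intro k _
  dsimp only
  push_cast
  rcases lt_or_ge (k : ℤ) c with h | h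
  · rw [abs_of_nonpos (by omega), abs_of_neg (by omega)]
    omega
  · rw [abs_of_nonneg (by omega), abs_of_nonneg (by omega)]
    omega

namespace IsUnitStepPath

variable {n k l : ℕ} {p q : ℕ → ℤ}

theorem const_add (hp : IsUnitStepPath n p) (a : ℤ) : IsUnitStepPath n fun m ↦ a + p m := by
  intro k hk
  have := hp k hk
  dsimp only
  omega

theorem const_sub (hp : IsUnitStepPath n p) (a : ℤ) : IsUnitStepPath n fun m ↦ a - p m := by
  intro k hk
  have := hp k hk
  dsimp only
  omega

theorem modEq_two (hp : IsUnitStepPath n p) (hk : k ≤ n) : p k ≡ p 0 + k [ZMOD 2] := by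
  induction k with
  | zero => simp
  | succ k ih =>
    have hstep := hp k hk
    have := ih (by omega)
    unfold Int.ModEq at this ⊢
    omega

-- Paths of equal parity cannot swap order within one step without first meeting.
protected theorem max (hp : IsUnitStepPath n p) (hq : IsUnitStepPath n q) (hk : k ≤ n)
    (hpq : p k ≡ q k [ZMOD 2]) : IsUnitStepPath n fun m ↦ max (p m) (q m) := by
  have hparity : p 0 ≡ q 0 [ZMOD 2] :=
    Int.ModEq.add_right_cancel' k <| (hp.modEq_two hk).symm.trans <| hpq.trans (hq.modEq_two hk)
  intro m hm
  have hmeq : p m ≡ q m [ZMOD 2] :=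
    (hp.modEq_two hm.le).trans <| (hparity.add_right _).trans (hq.modEq_two hm.le).symm
  have hpm := hp m hm
  have hqm := hq m hm
  unfold Int.ModEq at hmeq
  dsimp only
  omega

end IsUnitStepPath

section PathSegments

variable {N n k l : ℕ} {p : ℕ → ℤ} {s t : ℚ × ℚ}

theorem eq_pathSeg_iff : t = pathSeg p k ↔ supp t = k ∧ spar t = p k := by
  simp only [Prod.ext_iff, pathSeg, supp, spar]
  constructor <;> rintro ⟨h₁, h₂⟩ <;> constructor <;> linarith

theorem pathSeg_succ_of_up (h : p (k + 1) = p k + 1) :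
    pathSeg p (k + 1) = ((pathSeg p k).1, (pathSeg p k).2 + 1) := by
  ext <;> simp only [pathSeg, h] <;> push_cast <;> ring

theorem pathSeg_succ_of_down (h : p (k + 1) = p k - 1) :
    pathSeg p (k + 1) = ((pathSeg p k).1 - 1, (pathSeg p k).2) := by
  ext <;> simp only [pathSeg, h] <;> push_cast <;> ring

theorem IsUnitStepPath.pathSeg_nested (hp : IsUnitStepPath n p) (hkl : k ≤ l) (hl : l ≤ n) :
    zle (pathSeg p l).1 (pathSeg p k).1 ∧ zle (pathSeg p k).2 (pathSeg p l).2 := by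
  induction l, hkl using Nat.le_induction with
  | base => exact ⟨zle_refl _, zle_refl _⟩
  | succ l _ ih =>
    obtain ⟨hfst, hsnd⟩ := ih (by omega)
    rcases hp l hl with hup | hdown
    · rw [pathSeg_succ_of_up hup]
      exact ⟨hfst, hsnd.trans (zle_add_one _)⟩
    · rw [pathSeg_succ_of_down hdown]
      have hpred := zle_add_one ((pathSeg p l).1 - 1)
      rw [sub_add_cancel] at hpred
      exact ⟨hpred.trans hfst, hsnd⟩

theorem IsMYPath.isUnitStepPath (hp : IsMYPath N s p) : IsUnitStepPath (N + 1) p := hp.1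

theorem IsMYPath.pathSeg_zero (hp : IsMYPath N s p) : pathSeg p 0 = (s.2, s.2) := by
  ext <;> simp [pathSeg, hp.2.1]

theorem IsMYPath.pathSeg_last (hp : IsMYPath N s p) :
    pathSeg p (N + 1) = (s.1, ((N : ℚ) + 1) + s.1) := by
  ext <;> simp only [pathSeg, hp.2.2] <;> push_cast <;> ring

theorem IsMYPath.pathSeg_fst_zle_and_zle_snd (hp : IsMYPath N s p) (hk : k ≤ N + 1) :
    zle (pathSeg p k).1 s.2 ∧ zle s.2 (pathSeg p k).2 := by
  have := hp.isUnitStepPath.pathSeg_nested (Nat.zero_le k) hk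
  rwa [hp.pathSeg_zero] at this

theorem IsMYPath.zle_pathSeg_fst_and_snd_zle (hp : IsMYPath N s p) (hk : k ≤ N + 1) :
    zle s.1 (pathSeg p k).1 ∧ zle (pathSeg p k).2 (((N : ℚ) + 1) + s.1) := by
  have := hp.isUnitStepPath.pathSeg_nested hk le_rfl
  rwa [hp.pathSeg_last] at this

theorem IsMYPath.covers_of_mem_cMinus (hp : IsMYPath N s p) (ht : t ∈ cMinus N p) :
    Covers N t s := by
  obtain ⟨k, hk, hkN, rfl, hbefore, hafter⟩ := ht
  obtain ⟨m, rfl⟩ := Nat.exists_eq_add_of_le' hk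
  have hfst : zlt (pathSeg p (m + 1 + 1)).1 (pathSeg p (m + 1)).1 := by
    simpa [pathSeg_succ_of_down hafter] using zlt_add_one ((pathSeg p (m + 1)).1 - 1)
  have hsnd : zlt (pathSeg p m).2 (pathSeg p (m + 1)).2 := by
    rw [pathSeg_succ_of_up (eq_add_of_sub_eq hbefore.symm)]
    exact zlt_add_one _
  exact ⟨(hp.zle_pathSeg_fst_and_snd_zle (by omega)).1.trans_zlt hfst,
    (hp.pathSeg_fst_zle_and_zle_snd (by omega)).1,
    (hp.pathSeg_fst_zle_and_zle_snd (by omega)).2.trans_zlt hsnd,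
    (hp.zle_pathSeg_fst_and_snd_zle (by omega)).2⟩

theorem covers_of_mem_cSegMinus : t ∈ cSegMinus N s → Covers N t s :=
  fun ⟨_, hp, ht⟩ ↦ hp.covers_of_mem_cMinus ht

end PathSegments

section HighestPath

variable {N : ℕ} {s : ℚ × ℚ}

theorem highestPath_zero (hs : 0 ≤ supp s) : highestPath s 0 = 2 * s.2 := by
  rw [highestPath, zero_sub, abs_neg, abs_of_nonneg hs, spar, supp]
  ring

theorem highestPath_of_supp_le {x : ℚ} (hs : supp s ≤ x) : highestPath s x = x + 2 * s.1 := by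
  rw [highestPath, abs_of_nonneg (sub_nonneg.2 hs), spar, supp]
  ring

theorem spar_sub_highestPath_supp (s t : ℚ × ℚ) :
    spar t - highestPath s (supp t) = 2 * min (t.1 - s.1) (t.2 - s.2) := by
  have hsupp : supp t - supp s = (t.2 - s.2) - (t.1 - s.1) := by simp only [supp]; ring
  rw [highestPath, hsupp, abs_sub_comm, ← max_sub_min_eq_abs', spar, spar]
  linarith [min_add_max (t.1 - s.1) (t.2 - s.2)]

theorem IsSeg.exists_isMYPath_eq_highestPath (hs : IsSeg N s) :
    ∃ p, IsMYPath N s p ∧ ∀ k : ℕ, (p k : ℚ) = highestPath s k := by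
  obtain ⟨⟨m, hm⟩, n, hn, hn₀, hnN⟩ := hs
  have hsupp : supp s = n := hn
  have hspar : spar s = m + n := by rw [spar]; linarith
  have heq (k : ℕ) : ((m + n + |(k : ℤ) - n| : ℤ) : ℚ) = highestPath s k := by
    rw [highestPath, hspar, hsupp]
    push_cast
    rfl
  have hstep := (isUnitStepPath_abs_sub (N + 1) n).const_add (m + n)
  refine ⟨fun k ↦ m + n + |(k : ℤ) - n|, ⟨hstep, ?_, ?_⟩, heq⟩
  · rw [heq, Nat.cast_zero, highestPath_zero (by rw [hsupp]; exact_mod_cast hn₀)]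
  · rw [heq, Nat.cast_succ, highestPath_of_supp_le (hsupp.trans_le hnN)]

end HighestPath

/-- The path `p` with a peak of height `p k + 2 * e` put on it at `k` (meant for `0 ≤ e`): the
maximum of `p` and the tent of slopes `±1` with that apex. The value at `k` goes up by an even
amount so that the tent has the parity of `p`. -/
def raisePeak (p : ℕ → ℤ) (k : ℕ) (e : ℤ) (m : ℕ) : ℤ :=
  max (p m) (p k + 2 * e - |(m : ℤ) - k|)

section RaisePeak

variable {N n k : ℕ} {p : ℕ → ℤ} {s : ℚ × ℚ} {e : ℤ}

theorem raisePeak_self (he : 0 ≤ e) : raisePeak p k e k = p k + 2 * e := by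
  simp [raisePeak, he]

theorem raisePeak_eq_of_le {m : ℕ} (h : p k + 2 * e - |(m : ℤ) - k| ≤ p m) :
    raisePeak p k e m = p m :=
  max_eq_left h

protected theorem IsUnitStepPath.raisePeak (hp : IsUnitStepPath n p) (hk : k ≤ n) :
    IsUnitStepPath n (raisePeak p k e) := by
  refine hp.max ((isUnitStepPath_abs_sub n k).const_sub (p k + 2 * e)) hk ?_
  simp [Int.ModEq]

protected theorem IsMYPath.raisePeak (hp : IsMYPath N s p) (hk : k ≤ N + 1)
    (hzero : p k + 2 * e - k ≤ p 0) (hlast : p k + 2 * e + k ≤ p (N + 1) + (N + 1)) :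
    IsMYPath N s (raisePeak p k e) := by
  refine ⟨hp.isUnitStepPath.raisePeak hk, ?_, ?_⟩
  · rw [raisePeak_eq_of_le (by simpa using hzero), hp.2.1]
  · have hdist : |((N + 1 : ℕ) : ℤ) - k| = N + 1 - k := by
      rw [abs_of_nonneg (by omega)]
      push_cast
      rfl
    rw [raisePeak_eq_of_le (by omega), hp.2.2]

theorem pathSeg_raisePeak_mem_cMinus (hp : IsUnitStepPath (N + 1) p) (hk : 1 ≤ k)
    (hkN : k ≤ N) (he : 0 < e) :
    pathSeg (raisePeak p k e) k ∈ cMinus N (raisePeak p k e) := by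
  obtain ⟨m, rfl⟩ := Nat.exists_eq_add_of_le' hk
  have hbefore := hp m (by omega)
  have hafter := hp (m + 1) (by omega)
  have hdist : |(m : ℤ) - (m + 1 : ℕ)| = 1 := by simp
  have hdist' : |((m + 1 + 1 : ℕ) : ℤ) - (m + 1 : ℕ)| = 1 := by simp
  refine ⟨m + 1, hk, hkN, rfl, ?_⟩
  rw [Nat.add_sub_cancel, raisePeak_self he.le, raisePeak, raisePeak, hdist, hdist']
  omega

end RaisePeak

namespace Covers

variable {N : ℕ} {s t : ℚ × ℚ}

theorem exists_supp_eq (h : Covers N t s) : ∃ k : ℕ, 1 ≤ k ∧ k ≤ N ∧ supp t = k := by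
  obtain ⟨hfst, hmid, hsnd, htop⟩ := h
  obtain ⟨k, hk, hkt⟩ := hmid.trans_zlt hsnd
  have hkN : k < N + 1 := by
    have hlt : (k : ℚ) < N + 1 := by linarith [hfst.lt, htop.le]
    exact_mod_cast hlt
  lift k to ℕ using hk.le
  exact ⟨k, by omega, by omega, hkt⟩

theorem exists_spar_eq_highestPath_add (h : Covers N t s) :
    ∃ e : ℤ, 0 < e ∧ spar t = highestPath s (supp t) + 2 * e := by
  obtain ⟨⟨a, ha, hfst⟩, -, ⟨c, hc, hsnd⟩, -⟩ := h
  refine ⟨min a c, lt_min ha hc, ?_⟩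
  have := spar_sub_highestPath_supp s t
  rw [hfst, hsnd] at this
  push_cast
  linarith

theorem mem_cSegMinus (h : Covers N t s) (hs : IsSeg N s) : t ∈ cSegMinus N s := by
  obtain ⟨p, hp, hval⟩ := hs.exists_isMYPath_eq_highestPath
  obtain ⟨k, hk, hkN, hsupp⟩ := h.exists_supp_eq
  obtain ⟨e, he, hspar⟩ := h.exists_spar_eq_highestPath_add
  rw [hsupp, ← hval] at hspar
  have hzero : p k + 2 * e - k ≤ p 0 := by
    have hfst : spar t - supp t ≤ p 0 := by rw [hp.2.1, spar, supp]; linarith [h.2.1.le]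
    rw [hspar, hsupp] at hfst
    exact_mod_cast hfst
  have hlast : p k + 2 * e + k ≤ p (N + 1) + (N + 1) := by
    have hsnd : spar t + supp t ≤ p (N + 1) + (N + 1) := by
      rw [hp.2.2, spar, supp]; linarith [h.2.2.2.le]
    rw [hspar, hsupp] at hsnd
    exact_mod_cast hsnd
  have ht : t = pathSeg (raisePeak p k e) k :=
    eq_pathSeg_iff.2 ⟨hsupp, by rw [hspar, raisePeak_self he.le]; push_cast; rfl⟩
  rw [ht]
  exact ⟨raisePeak p k e, hp.raisePeak (by omega) hzero hlast,
    pathSeg_raisePeak_mem_cMinus hp.isUnitStepPath hk hkN he⟩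

end Covers

/-- For segments `s₁, s₂`: `s₁ ∈ c_{s₂}^-` if and only if `s₁ ▷ s₂`. -/
theorem mem_cSegMinus_iff_covers (N : ℕ) (hN : 1 ≤ N) (s₁ s₂ : ℚ × ℚ)
    (h₁ : IsSeg N s₁) (h₂ : IsSeg N s₂) :
    s₁ ∈ cSegMinus N s₂ ↔ Covers N s₁ s₂ :=
  ⟨covers_of_mem_cSegMinus, fun h ↦ h.mem_cSegMinus h₂⟩

end SnakePaper
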